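/- Suppose f satisfies α F(u) ≤ u f(u) + β u² + α θ for all u > 0, where F(u) := ∫₀^u f(s) ds, for some α > 2, 0 < β ≤ λ₁(α − 2)/2, θ > 0, and suppose 𝓕₀ := −(1/2)∫_D |∇_γ u₀|² dxdy + ∫_D (F(u₀) − θ) dxdy > 0. Let u be a positive classical solution of the pseudo-parabolic problem, set σ := √(α/2) − 1, M := (1+σ)(1 + 1/σ)(∫_D (u₀² + |∇_γ u₀|²) dxdy)² / (2α 𝓕₀), and define E(t) := ∫₀^t ∫_D (u² + |∇_γ u|²) dxdy dτ + M. Then for all t ≥ 0 in the interval of existence, E''(t) E(t) − (1+σ)(E'(t))² ≥ 0. -/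

import Mathlib

open MeasureTheory Real Set Filter
open scoped ENNReal

noncomputable section

/-- The Baouendi–Grushin space `ℝ^m × ℝ^k`. -/
abbrev GS (m k : ℕ) := EuclideanSpace ℝ (Fin m) × EuclideanSpace ℝ (Fin k)

/-- Unit coordinate vector in the `i`-th `x`-direction. -/
def eX (m k : ℕ) (i : Fin m) : GS m k := (EuclideanSpace.single i (1 : ℝ), 0)

/-- Unit coordinate vector in the `j`-th `y`-direction. -/
def eY (m k : ℕ) (j : Fin k) : GS m k := (0, EuclideanSpace.single j (1 : ℝ))

/-- Squared length `|∇_γ v|²` of the Baouendi–Grushin gradient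
`∇_γ v = (∇_x v, |x|^γ ∇_y v)`. -/
def gradSqG {m k : ℕ} (γ : ℝ) (v : GS m k → ℝ) (z : GS m k) : ℝ :=
  (∑ i, (fderiv ℝ v z (eX m k i)) ^ 2) +
    ‖z.1‖ ^ (2 * γ) * ∑ j, (fderiv ℝ v z (eY m k j)) ^ 2

/-- Pointwise inner product `∇_γ v · ∇_γ w` of Baouendi–Grushin gradients. -/
def dotG {m k : ℕ} (γ : ℝ) (v w : GS m k → ℝ) (z : GS m k) : ℝ :=
  (∑ i, fderiv ℝ v z (eX m k i) * fderiv ℝ w z (eX m k i)) +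
    ‖z.1‖ ^ (2 * γ) * ∑ j, fderiv ℝ v z (eY m k j) * fderiv ℝ w z (eY m k j)

/-- The Baouendi–Grushin operator `Δ_γ v = Δ_x v + |x|^{2γ} Δ_y v`. -/
def lapG {m k : ℕ} (γ : ℝ) (v : GS m k → ℝ) (z : GS m k) : ℝ :=
  (∑ i, fderiv ℝ (fun w => fderiv ℝ v w (eX m k i)) z (eX m k i)) +
    ‖z.1‖ ^ (2 * γ) * ∑ j, fderiv ℝ (fun w => fderiv ℝ v w (eY m k j)) z (eY m k j)

/-- The antiderivative `F(x) = ∫₀ˣ f(s) ds`. -/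
def Fprim (f : ℝ → ℝ) (x : ℝ) : ℝ := ∫ s in (0 : ℝ)..x, f s

/-- A domain as in the paper: bounded, open, connected, and such that `D` minus the
degeneracy set `{(x,y) ∈ closure D : x = 0}` consists of only one connected component. -/
structure GoodDomain (m k : ℕ) (D : Set (GS m k)) : Prop where
  isOpen : IsOpen D
  isConnected : IsConnected D
  isBounded : Bornology.IsBounded D
  conn_off_degeneracy : IsConnected (D \ {z : GS m k | z ∈ closure D ∧ z.1 = 0})

/-- `D` supports the divergence formula: Green's first identity for `Δ_γ` holds for smooth
functions, the first of which vanishes on `∂D`. -/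
def SupportsDivFormula {m k : ℕ} (γ : ℝ) (D : Set (GS m k)) : Prop :=
  ∀ v w : GS m k → ℝ, ContDiff ℝ (⊤ : ℕ∞) v → ContDiff ℝ (⊤ : ℕ∞) w →
    (∀ z ∈ frontier D, v z = 0) →
    ∫ z in D, v z * lapG γ w z = -∫ z in D, dotG γ v w z

/-- The nonlinearity `f`: locally Lipschitz on `ℝ`, `f(0) = 0`, and `f(u) > 0` for `u > 0`. -/
structure GoodNonlinearity (f : ℝ → ℝ) : Prop where
  locallyLipschitz : LocallyLipschitz f
  zero : f 0 = 0
  pos : ∀ s : ℝ, 0 < s → 0 < f s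

/-- The initial datum `u₀`: of class `C¹`, non-negative and non-trivial on `closure D`,
vanishing on `∂D`. -/
structure GoodInitialData {m k : ℕ} (D : Set (GS m k)) (u₀ : GS m k → ℝ) : Prop where
  contDiff : ContDiff ℝ 1 u₀
  nonneg : ∀ z ∈ closure D, 0 ≤ u₀ z
  nontrivial : ∃ z ∈ D, u₀ z ≠ 0
  bdry : ∀ z ∈ frontier D, u₀ z = 0

/-- A positive classical solution `u` of the pseudo-parabolic problem
`u_t − Δ_γ u_t − Δ_γ u = f(u)` in `D × (0,T)`, `u = 0` on `∂D × (0,T)`, `u(0) = u₀`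
on `closure D`, where `T ∈ (0,∞]` is the interval of existence; `u` is smooth enough
that all derivatives exist. -/
structure IsPosSolution {m k : ℕ} (γ : ℝ) (D : Set (GS m k)) (f : ℝ → ℝ)
    (u₀ : GS m k → ℝ) (T : ℝ≥0∞) (u : ℝ → GS m k → ℝ) : Prop where
  smooth : ContDiff ℝ (⊤ : ℕ∞) (fun p : ℝ × GS m k => u p.1 p.2)
  pos : ∀ t : ℝ, 0 < t → ENNReal.ofReal t < T → ∀ z ∈ D, 0 < u t z
  eqn : ∀ t : ℝ, 0 < t → ENNReal.ofReal t < T → ∀ z ∈ D,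
    deriv (fun s => u s z) t
      - lapG γ (fun w => deriv (fun s => u s w) t) z
      - lapG γ (u t) z = f (u t z)
  bdry : ∀ t : ℝ, 0 < t → ENNReal.ofReal t < T → ∀ z ∈ frontier D, u t z = 0
  init : ∀ z ∈ closure D, u 0 z = u₀ z

/-!
Let `⟨v, w⟩ = ∫_D (v w + ∇_γ v · ∇_γ w)`, so that `E' = ⟨u, u⟩` and `E'' = 2 ⟨u, u_t⟩`. Testing
the equation with `v` vanishing on `∂D` gives `⟨v, u_t⟩ + ∫_D ∇_γ v · ∇_γ u = ∫_D v f(u)`.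
The choice `v = u_t` says that `𝓕(t) = -½ ∫_D |∇_γ u|² + ∫_D (F(u) - θ)` has derivative
`⟨u_t, u_t⟩`; the choice `v = u`, with the growth condition and the Poincaré inequality, says that
`E'' ≥ 2α 𝓕(t)`. Hence `E'' ≥ 2α (𝓕₀ + ∫₀ᵗ ⟨u_t, u_t⟩)`. On the other hand, Cauchy–Schwarz on
`D × (0, t)` bounds `(E'(t) - E'(0))²` by `4 ∫₀ᵗ ⟨u, u⟩ · ∫₀ᵗ ⟨u_t, u_t⟩`, and Young's inequality
bounds `E'(t)²` by `(1 + σ) (E'(t) - E'(0))² + (1 + 1/σ) E'(0)²`. Since `(1 + σ)² = α/2`, the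
first part is absorbed by `∫₀ᵗ ⟨u_t, u_t⟩` and the second, by the choice of `M`, by `𝓕₀`.
-/

open Function Bornology
open scoped ContDiff

section BoundedDomain

variable {X E : Type*} [MetricSpace X] [ProperSpace X] [MeasurableSpace X]
  [OpensMeasurableSpace X] [NormedAddCommGroup E] {μ : Measure X}
  [IsFiniteMeasureOnCompacts μ] {D : Set X}

lemma integrableOn_of_isBounded_of_continuous (hD : IsBounded D) {g : X → E}
    (hg : Continuous g) : IntegrableOn g D μ :=
  (hg.continuousOn.integrableOn_compact hD.isCompact_closure).mono_set subset_closure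

variable [NormedSpace ℝ E]

lemma continuous_setIntegral_of_isBounded {Y : Type*} [TopologicalSpace Y]
    [FirstCountableTopology Y] [LocallyCompactSpace Y] (hD : IsBounded D) {g : Y → X → E}
    (hg : Continuous (uncurry g)) : Continuous fun t => ∫ z in D, g t z ∂μ := by
  have restrict_closure : (μ.restrict D).restrict (closure D) = μ.restrict D := by
    rw [Measure.restrict_restrict isClosed_closure.measurableSet,
      inter_eq_self_of_subset_right subset_closure]
  rw [← restrict_closure]
  exact continuous_parametric_integral_of_continuous hg hD.isCompact_closure

lemma hasDerivAt_setIntegral_of_isBounded (hD : IsBounded D) {g g' : ℝ → X → E}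
    (hg : ∀ t, Continuous (g t)) (hg' : Continuous (uncurry g'))
    (hderiv : ∀ t z, HasDerivAt (fun s => g s z) (g' t z) t) (t : ℝ) :
    HasDerivAt (fun s => ∫ z in D, g s z ∂μ) (∫ z in D, g' t z ∂μ) t := by
  obtain ⟨C, hC⟩ := ((isCompact_closedBall t 1).prod
    hD.isCompact_closure).exists_bound_of_continuousOn hg'.continuousOn
  have mem_closure : ∀ᵐ z ∂μ.restrict D, z ∈ closure D :=
    ae_restrict_of_ae_restrict_of_subset subset_closure
      (ae_restrict_mem isClosed_closure.measurableSet)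
  refine (hasDerivAt_integral_of_dominated_loc_of_deriv_le (bound := fun _ => C)
    (Metric.ball_mem_nhds t one_pos)
    (.of_forall fun s => (integrableOn_of_isBounded_of_continuous hD (hg s)).aestronglyMeasurable)
    (integrableOn_of_isBounded_of_continuous hD (hg t))
    (integrableOn_of_isBounded_of_continuous hD
      (hg'.comp (Continuous.prodMk_right t))).aestronglyMeasurable ?_
    (integrableOn_of_isBounded_of_continuous hD continuous_const)
    (.of_forall fun z s _ => hderiv s z)).2
  filter_upwards [mem_closure] with z hz s hs
  exact hC (s, z) ⟨Metric.ball_subset_closedBall hs, hz⟩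

end BoundedDomain

section QuadraticForms

lemma integral_quadratic_nonneg {X : Type*} [MeasurableSpace X] {μ : Measure X} {a b c : X → ℝ}
    (ha : Integrable a μ) (hb : Integrable b μ) (hc : Integrable c μ)
    (h : ∀ x r, 0 ≤ a x * (r * r) + b x * r + c x) (r : ℝ) :
    0 ≤ (∫ x, a x ∂μ) * (r * r) + (∫ x, b x ∂μ) * r + ∫ x, c x ∂μ := by
  calc 0 ≤ ∫ x, (a x * (r * r) + b x * r + c x) ∂μ := integral_nonneg fun x => h x r
    _ = _ := by
      rw [integral_add ((ha.mul_const _).fun_add (hb.mul_const _)) hc,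
        integral_add (ha.mul_const _) (hb.mul_const _), integral_mul_const, integral_mul_const]

lemma sq_sub_le_of_quadratic_nonneg {G G' H : ℝ → ℝ} {a b : ℝ} (hab : a ≤ b)
    (hG : ∀ s, HasDerivAt G (G' s) s) (hG' : Continuous G') (hH : Continuous H)
    (h : ∀ s r, 0 ≤ G s * (r * r) + G' s * r + H s) :
    (G b - G a) ^ 2 ≤ 4 * (∫ s in a..b, G s) * ∫ s in a..b, H s := by
  have integrableOn {g : ℝ → ℝ} (hg : Continuous g) : IntegrableOn g (Ioc a b) :=
    (hg.intervalIntegrable a b).1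
  have G_continuous : Continuous G :=
    continuous_iff_continuousAt.2 fun s => (hG s).continuousAt
  have discrim_nonpos := discrim_le_zero <| integral_quadratic_nonneg
    (integrableOn G_continuous) (integrableOn hG') (integrableOn hH) h
  rw [← intervalIntegral.integral_eq_sub_of_hasDerivAt (fun s _ => hG s)
    (hG'.intervalIntegrable a b)]
  simp only [intervalIntegral.integral_of_le hab]
  exact sub_nonpos.1 discrim_nonpos

lemma sq_le_one_add_mul_sq_sub {σ : ℝ} (hσ : 0 < σ) (a b : ℝ) :
    a ^ 2 ≤ (1 + σ) * (a - b) ^ 2 + (1 + 1 / σ) * b ^ 2 := by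
  have defect : (1 + σ) * (a - b) ^ 2 + (1 + 1 / σ) * b ^ 2 - a ^ 2
      = (σ * (a - b) - b) ^ 2 / σ := by
    field_simp
    ring
  have defect_nonneg : 0 ≤ (σ * (a - b) - b) ^ 2 / σ := by positivity
  linarith

/- Here `A = ∫₀ᵗ ⟨u, u⟩`, `B = ∫₀ᵗ ⟨u_t, u_t⟩`, `g = E'(t)`, `g₀ = E'(0)` and `d = E''(t)`. -/
lemma concavity_of_sq_sub_le {α σ F₀ M A B g g₀ d : ℝ} (hα : 2 < α)
    (hσ : σ = √(α / 2) - 1) (hF₀ : 0 < F₀)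
    (hM : M = (1 + σ) * (1 + 1 / σ) * g₀ ^ 2 / (2 * α * F₀)) (hA : 0 ≤ A) (hB : 0 ≤ B)
    (hg : (g - g₀) ^ 2 ≤ 4 * A * B) (hd : 2 * α * (F₀ + B) ≤ d) :
    0 ≤ d * (A + M) - (1 + σ) * g ^ 2 := by
  have one_lt_sqrt : 1 < √(α / 2) := Real.lt_sqrt_of_sq_lt (by linarith)
  have σ_pos : 0 < σ := by linarith
  have one_add_σ_sq : (1 + σ) ^ 2 = α / 2 := by
    rw [hσ, add_sub_cancel, Real.sq_sqrt (by linarith)]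
  have M_nonneg : 0 ≤ M := by rw [hM]; positivity
  have M_mul : (1 + σ) * (1 + 1 / σ) * g₀ ^ 2 = 2 * α * F₀ * M := by rw [hM]; field_simp
  refine sub_nonneg.2 ?_
  calc (1 + σ) * g ^ 2
      ≤ (1 + σ) * ((1 + σ) * (g - g₀) ^ 2 + (1 + 1 / σ) * g₀ ^ 2) := by
        gcongr
        exact sq_le_one_add_mul_sq_sub σ_pos g g₀
    _ = (1 + σ) ^ 2 * (g - g₀) ^ 2 + (1 + σ) * (1 + 1 / σ) * g₀ ^ 2 := by ring
    _ = α / 2 * (g - g₀) ^ 2 + 2 * α * F₀ * M := by rw [one_add_σ_sq, M_mul]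
    _ ≤ α / 2 * (4 * A * B) + 2 * α * F₀ * M := by gcongr
    _ ≤ α / 2 * (4 * A * B) + 2 * α * F₀ * M + 2 * α * (F₀ * A + B * M) :=
        le_add_of_nonneg_right (by positivity)
    _ = 2 * α * (F₀ + B) * (A + M) := by ring
    _ ≤ d * (A + M) := by gcongr

end QuadraticForms

section TimeDerivative

variable {E F : Type*} [NormedAddCommGroup E] [NormedSpace ℝ E] [NormedAddCommGroup F]
  [NormedSpace ℝ F]

/-- The partial derivative `u_t` of a time-dependent function `u t z`. -/
def timeDeriv (u : ℝ → E → F) (t : ℝ) (z : E) : F := deriv (fun s => u s z) t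

variable {u : ℝ → E → F}

lemma hasDerivAt_uncurry_left {t : ℝ} {z : E} (hu : DifferentiableAt ℝ (uncurry u) (t, z)) :
    HasDerivAt (fun s => u s z) (fderiv ℝ (uncurry u) (t, z) (1, 0)) t :=
  hu.hasFDerivAt.comp_hasDerivAt (f := fun s => (s, z)) t
    ((hasDerivAt_id t).prodMk (hasDerivAt_const t z))

lemma timeDeriv_eq_fderiv_uncurry {t : ℝ} {z : E}
    (hu : DifferentiableAt ℝ (uncurry u) (t, z)) :
    timeDeriv u t z = fderiv ℝ (uncurry u) (t, z) (1, 0) :=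
  (hasDerivAt_uncurry_left hu).deriv

lemma hasDerivAt_timeDeriv (hu : Differentiable ℝ (uncurry u)) (t : ℝ) (z : E) :
    HasDerivAt (fun s => u s z) (timeDeriv u t z) t :=
  (hasDerivAt_uncurry_left (hu (t, z))).differentiableAt.hasDerivAt

lemma fderiv_uncurry_right {t : ℝ} {z : E} (hu : DifferentiableAt ℝ (uncurry u) (t, z)) (e : E) :
    fderiv ℝ (u t) z e = fderiv ℝ (uncurry u) (t, z) (0, e) := by
  have slice : HasFDerivAt (u t) _ z :=
    hu.hasFDerivAt.comp z (hasFDerivAt_prodMk_right t z)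
  simp [slice.fderiv]

lemma contDiff_slice {n : ℕ∞ω} (hu : ContDiff ℝ n (uncurry u)) (t : ℝ) : ContDiff ℝ n (u t) :=
  hu.comp (contDiff_const.prodMk contDiff_id)

lemma contDiff_timeDeriv {n k : ℕ∞ω} (hu : ContDiff ℝ k (uncurry u)) (hnk : n + 1 ≤ k) :
    ContDiff ℝ n (uncurry (timeDeriv u)) := by
  have differentiable : Differentiable ℝ (uncurry u) :=
    hu.differentiable (by rintro rfl; simp at hnk)
  have timeDeriv_eq : uncurry (timeDeriv u) = fun p => fderiv ℝ (uncurry u) p (1, 0) :=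
    funext fun p => timeDeriv_eq_fderiv_uncurry (differentiable p)
  rw [timeDeriv_eq]
  exact (hu.fderiv_right hnk).clm_apply contDiff_const

/- Both mixed second derivatives are values of the symmetric form `D²u(t, z)` at `(1, 0)` and
`(0, e)`. -/
lemma hasDerivAt_fderiv_apply (hu : ContDiff ℝ 2 (uncurry u)) (t : ℝ) (z e : E) :
    HasDerivAt (fun s => fderiv ℝ (u s) z e) (fderiv ℝ (timeDeriv u t) z e) t := by
  have differentiable : Differentiable ℝ (uncurry u) := hu.differentiable two_ne_zero
  have fderiv_contDiff : ContDiff ℝ 1 (fderiv ℝ (uncurry u)) :=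
    hu.fderiv_right (by norm_num)
  have hasFDerivAt_fderiv (a : ℝ × E) := ((fderiv_contDiff.differentiable one_ne_zero
    (t, z)).hasFDerivAt.clm_apply (hasFDerivAt_const a (t, z)))
  have symmetric : IsSymmSndFDerivAt ℝ (uncurry u) (t, z) :=
    hu.contDiffAt.isSymmSndFDerivAt (by simp)
  have space_then_time : HasDerivAt (fun s => fderiv ℝ (uncurry u) (s, z) (0, e))
      (fderiv ℝ (fderiv ℝ (uncurry u)) (t, z) (1, 0) (0, e)) t := by
    simpa [comp_def] using (hasFDerivAt_fderiv (0, e)).comp_hasDerivAt (f := fun s => (s, z)) t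
      ((hasDerivAt_id t).prodMk (hasDerivAt_const t z))
  have time_then_space : fderiv ℝ (fun w => fderiv ℝ (uncurry u) (t, w) (1, 0)) z e
      = fderiv ℝ (fderiv ℝ (uncurry u)) (t, z) (0, e) (1, 0) := by
    have slice := (hasFDerivAt_fderiv (1, 0)).comp z (hasFDerivAt_prodMk_right t z)
    simpa [comp_def] using congrArg (· e) slice.fderiv
  have timeDeriv_eq : timeDeriv u t = fun w => fderiv ℝ (uncurry u) (t, w) (1, 0) :=
    funext fun w => timeDeriv_eq_fderiv_uncurry (differentiable (t, w))
  simpa only [timeDeriv_eq, time_then_space, symmetric (0, e) (1, 0),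
    fderiv_uncurry_right (differentiable _)] using space_then_time

end TimeDerivative

section GrushinGradient

variable {m k : ℕ} {γ : ℝ}

lemma gradSqG_eq_dotG_self (γ : ℝ) (v : GS m k → ℝ) (z : GS m k) :
    gradSqG γ v z = dotG γ v v z := by
  simp only [gradSqG, dotG, sq]

lemma dotG_comm (γ : ℝ) (v w : GS m k → ℝ) (z : GS m k) : dotG γ v w z = dotG γ w v z := by
  simp only [dotG, mul_comm]

lemma gradSqG_nonneg (γ : ℝ) (v : GS m k → ℝ) (z : GS m k) : 0 ≤ gradSqG γ v z := by
  unfold gradSqG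
  positivity

lemma gradSqG_quadratic_nonneg (γ : ℝ) (v w : GS m k → ℝ) (z : GS m k) (r : ℝ) :
    0 ≤ gradSqG γ v z * (r * r) + 2 * dotG γ v w z * r + gradSqG γ w z := by
  have sum_sq_expand {n : ℕ} (a b : Fin n → ℝ) : ∑ i, (r * a i + b i) ^ 2 =
      (∑ i, a i ^ 2) * (r * r) + 2 * (∑ i, a i * b i) * r + ∑ i, b i ^ 2 := by
    simp only [Finset.sum_mul, Finset.mul_sum, ← Finset.sum_add_distrib]
    exact Finset.sum_congr rfl fun i _ => by ring
  calc 0 ≤ (∑ i, (r * fderiv ℝ v z (eX m k i) + fderiv ℝ w z (eX m k i)) ^ 2) + ‖z.1‖ ^ (2 * γ) *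
        ∑ j, (r * fderiv ℝ v z (eY m k j) + fderiv ℝ w z (eY m k j)) ^ 2 := by positivity
    _ = _ := by
      rw [sum_sq_expand, sum_sq_expand]
      unfold gradSqG dotG
      ring

lemma continuous_norm_fst_rpow (hγ : 0 ≤ γ) : Continuous fun z : GS m k => ‖z.1‖ ^ (2 * γ) :=
  continuous_fst.norm.rpow_const fun _ => .inr (by positivity)

lemma continuous_lapG (hγ : 0 ≤ γ) {v : GS m k → ℝ} (hv : ContDiff ℝ 2 v) :
    Continuous (lapG γ v) := by
  have second_deriv (e : GS m k) :
      Continuous fun z => fderiv ℝ (fun w => fderiv ℝ v w e) z e := by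
    have first_deriv : ContDiff ℝ 1 fun w => fderiv ℝ v w e :=
      (hv.fderiv_right (by norm_num)).clm_apply contDiff_const
    exact (first_deriv.continuous_fderiv one_ne_zero).clm_apply continuous_const
  exact (continuous_finsetSum _ fun i _ => second_deriv _).add
    ((continuous_norm_fst_rpow hγ).mul (continuous_finsetSum _ fun j _ => second_deriv _))

lemma continuous_uncurry_dotG (hγ : 0 ≤ γ) {v w : ℝ → GS m k → ℝ}
    (hv : ContDiff ℝ 1 (uncurry v)) (hw : ContDiff ℝ 1 (uncurry w)) :
    Continuous (uncurry fun t => dotG γ (v t) (w t)) := by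
  have partial_deriv {v : ℝ → GS m k → ℝ} (hv : ContDiff ℝ 1 (uncurry v)) (e : GS m k) :
      Continuous fun p : ℝ × GS m k => fderiv ℝ (v p.1) p.2 e := by
    have comp_fst : ContDiff ℝ 1 (uncurry fun p : ℝ × GS m k => v p.1) :=
      hv.comp (contDiff_fst.fst.prodMk contDiff_snd)
    exact (Continuous.fderiv comp_fst continuous_snd le_rfl).clm_apply continuous_const
  exact (continuous_finsetSum _ fun i _ => (partial_deriv hv _).mul (partial_deriv hw _)).add
    (((continuous_norm_fst_rpow hγ).comp continuous_snd).mul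
      (continuous_finsetSum _ fun j _ => (partial_deriv hv _).mul (partial_deriv hw _)))

lemma continuous_dotG (hγ : 0 ≤ γ) {v w : GS m k → ℝ} (hv : ContDiff ℝ 1 v)
    (hw : ContDiff ℝ 1 w) : Continuous (dotG γ v w) :=
  (continuous_uncurry_dotG hγ (v := fun _ => v) (w := fun _ => w) (hv.comp contDiff_snd)
    (hw.comp contDiff_snd)).comp (Continuous.prodMk_right 0)

lemma continuous_gradSqG (hγ : 0 ≤ γ) {v : GS m k → ℝ} (hv : ContDiff ℝ 1 v) :
    Continuous (gradSqG γ v) :=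
  (continuous_dotG hγ hv hv).congr fun z => (gradSqG_eq_dotG_self γ v z).symm

lemma hasDerivAt_gradSqG (γ : ℝ) {u : ℝ → GS m k → ℝ} (hu : ContDiff ℝ 2 (uncurry u)) (t : ℝ)
    (z : GS m k) :
    HasDerivAt (fun s => gradSqG γ (u s) z) (2 * dotG γ (u t) (timeDeriv u t) z) t := by
  have sq_partial (e : GS m k) : HasDerivAt (fun s => fderiv ℝ (u s) z e ^ 2)
      (2 * (fderiv ℝ (u t) z e * fderiv ℝ (timeDeriv u t) z e)) t := by
    simpa [mul_assoc] using (hasDerivAt_fderiv_apply hu t z e).fun_pow 2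
  refine ((HasDerivAt.fun_sum fun i _ => sq_partial (eX m k i)).add
    ((HasDerivAt.fun_sum fun j _ => sq_partial (eY m k j)).const_mul
      (‖z.1‖ ^ (2 * γ)))).congr_deriv ?_
  simp only [dotG, ← Finset.mul_sum]
  ring

lemma gradSqG_eqOn_of_eqOn (γ : ℝ) {D : Set (GS m k)} (hD : IsOpen D) {v w : GS m k → ℝ}
    (h : EqOn v w D) : EqOn (gradSqG γ v) (gradSqG γ w) D := fun z hz => by
  simp only [gradSqG, (h.eventuallyEq_of_mem (hD.mem_nhds hz)).fderiv_eq]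

end GrushinGradient

section Energies

variable {m k : ℕ} {γ : ℝ} {D : Set (GS m k)}

/-- The Sobolev inner product `⟨v, w⟩ = ∫_D (v w + ∇_γ v · ∇_γ w)` of `H^{1,γ}(D)`. -/
def h1Inner (γ : ℝ) (D : Set (GS m k)) (v w : GS m k → ℝ) : ℝ :=
  ∫ z in D, (v z * w z + dotG γ v w z)

/-- The squared Sobolev norm `⟨v, v⟩ = ∫_D (v² + |∇_γ v|²)`; along a solution it is `E'`. -/
def h1Energy (γ : ℝ) (D : Set (GS m k)) (v : GS m k → ℝ) : ℝ :=
  ∫ z in D, ((v z) ^ 2 + gradSqG γ v z)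

/-- The functional `𝓕(v) = -½ ∫_D |∇_γ v|² + ∫_D (F(v) - θ)`, whose value at `u₀` is `𝓕₀`. -/
def potentialEnergy (γ : ℝ) (D : Set (GS m k)) (f : ℝ → ℝ) (θ : ℝ) (v : GS m k → ℝ) : ℝ :=
  -(1 / 2) * (∫ z in D, gradSqG γ v z) + ∫ z in D, (Fprim f (v z) - θ)

lemma h1Inner_self (γ : ℝ) (D : Set (GS m k)) (v : GS m k → ℝ) :
    h1Inner γ D v v = h1Energy γ D v := by
  simp only [h1Inner, h1Energy, gradSqG_eq_dotG_self, sq]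

lemma h1Energy_nonneg (γ : ℝ) (D : Set (GS m k)) (v : GS m k → ℝ) : 0 ≤ h1Energy γ D v :=
  integral_nonneg fun z => add_nonneg (sq_nonneg _) (gradSqG_nonneg γ v z)

lemma h1Energy_congr (hD : IsOpen D) {v w : GS m k → ℝ} (h : EqOn v w D) :
    h1Energy γ D v = h1Energy γ D w :=
  setIntegral_congr_fun hD.measurableSet fun z hz => by
    simp only [h hz, gradSqG_eqOn_of_eqOn γ hD h hz]

lemma potentialEnergy_congr (hD : IsOpen D) {f : ℝ → ℝ} {θ : ℝ} {v w : GS m k → ℝ}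
    (h : EqOn v w D) : potentialEnergy γ D f θ v = potentialEnergy γ D f θ w := by
  have potential_eq : ∫ z in D, (Fprim f (v z) - θ) = ∫ z in D, (Fprim f (w z) - θ) :=
    setIntegral_congr_fun hD.measurableSet fun z hz => by simp only [h hz]
  rw [potentialEnergy, potentialEnergy, potential_eq,
    setIntegral_congr_fun hD.measurableSet (gradSqG_eqOn_of_eqOn γ hD h)]

lemma h1Inner_eq_add (hγ : 0 ≤ γ) (hD : IsBounded D) {v w : GS m k → ℝ} (hv : ContDiff ℝ 1 v)
    (hw : ContDiff ℝ 1 w) :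
    h1Inner γ D v w = (∫ z in D, v z * w z) + ∫ z in D, dotG γ v w z :=
  integral_add (integrableOn_of_isBounded_of_continuous hD (hv.continuous.mul hw.continuous))
    (integrableOn_of_isBounded_of_continuous hD (continuous_dotG hγ hv hw))

lemma h1Energy_quadratic_nonneg (hγ : 0 ≤ γ) (hD : IsBounded D) {v w : GS m k → ℝ}
    (hv : ContDiff ℝ 1 v) (hw : ContDiff ℝ 1 w) (r : ℝ) :
    0 ≤ h1Energy γ D v * (r * r) + 2 * h1Inner γ D v w * r + h1Energy γ D w := by
  have integrable {g : GS m k → ℝ} (hg : Continuous g) : IntegrableOn g D :=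
    integrableOn_of_isBounded_of_continuous hD hg
  have pointwise (z : GS m k) (r : ℝ) : 0 ≤ (v z ^ 2 + gradSqG γ v z) * (r * r)
      + 2 * (v z * w z + dotG γ v w z) * r + (w z ^ 2 + gradSqG γ w z) := by
    linarith [gradSqG_quadratic_nonneg γ v w z r, sq_nonneg (r * v z + w z)]
  rw [h1Energy, h1Energy, h1Inner, ← integral_const_mul]
  exact integral_quadratic_nonneg
    (integrable ((hv.continuous.pow 2).add (continuous_gradSqG hγ hv)))
    (integrable (((hv.continuous.mul hw.continuous).add (continuous_dotG hγ hv hw)).const_mul 2))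
    (integrable ((hw.continuous.pow 2).add (continuous_gradSqG hγ hw))) pointwise r

lemma continuous_h1Inner (hγ : 0 ≤ γ) (hD : IsBounded D) {v w : ℝ → GS m k → ℝ}
    (hv : ContDiff ℝ 1 (uncurry v)) (hw : ContDiff ℝ 1 (uncurry w)) :
    Continuous fun t => h1Inner γ D (v t) (w t) :=
  continuous_setIntegral_of_isBounded hD
    ((hv.continuous.mul hw.continuous).add (continuous_uncurry_dotG hγ hv hw))

lemma continuous_h1Energy (hγ : 0 ≤ γ) (hD : IsBounded D) {v : ℝ → GS m k → ℝ}
    (hv : ContDiff ℝ 1 (uncurry v)) : Continuous fun t => h1Energy γ D (v t) := by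
  simpa only [h1Inner_self] using continuous_h1Inner hγ hD hv hv

lemma hasDerivAt_h1Energy (hγ : 0 ≤ γ) (hD : IsBounded D) {u : ℝ → GS m k → ℝ}
    (hu : ContDiff ℝ 2 (uncurry u)) (t : ℝ) :
    HasDerivAt (fun s => h1Energy γ D (u s)) (2 * h1Inner γ D (u t) (timeDeriv u t)) t := by
  have u_C1 : ContDiff ℝ 1 (uncurry u) := hu.of_le one_le_two
  have ut_C1 : ContDiff ℝ 1 (uncurry (timeDeriv u)) := contDiff_timeDeriv hu (by norm_num)
  rw [h1Inner, ← integral_const_mul]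
  refine hasDerivAt_setIntegral_of_isBounded hD
    (g' := fun t z => 2 * (u t z * timeDeriv u t z + dotG γ (u t) (timeDeriv u t) z))
    (fun s => ((contDiff_slice u_C1 s).continuous.pow 2).add
      (continuous_gradSqG hγ (contDiff_slice u_C1 s)))
    (((u_C1.continuous.mul ut_C1.continuous).add
      (continuous_uncurry_dotG hγ u_C1 ut_C1)).const_mul 2) (fun s z => ?_) t
  refine (((hasDerivAt_timeDeriv (hu.differentiable two_ne_zero) s z).fun_pow 2).add
    (hasDerivAt_gradSqG γ hu s z)).congr_deriv ?_
  simp only [Nat.cast_ofNat]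
  ring

lemma hasDerivAt_Fprim {f : ℝ → ℝ} (hf : Continuous f) (x : ℝ) :
    HasDerivAt (Fprim f) (f x) x :=
  hf.integral_hasStrictDerivAt 0 x |>.hasDerivAt

lemma continuous_Fprim {f : ℝ → ℝ} (hf : Continuous f) : Continuous (Fprim f) :=
  continuous_iff_continuousAt.2 fun x => (hasDerivAt_Fprim hf x).continuousAt

lemma hasDerivAt_potentialEnergy (hγ : 0 ≤ γ) (hD : IsBounded D) {f : ℝ → ℝ} (hf : Continuous f)
    (θ : ℝ) {u : ℝ → GS m k → ℝ} (hu : ContDiff ℝ 2 (uncurry u)) (t : ℝ) :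
    HasDerivAt (fun s => potentialEnergy γ D f θ (u s))
      ((∫ z in D, timeDeriv u t z * f (u t z)) - ∫ z in D, dotG γ (timeDeriv u t) (u t) z) t := by
  have u_C1 : ContDiff ℝ 1 (uncurry u) := hu.of_le one_le_two
  have ut_C1 : ContDiff ℝ 1 (uncurry (timeDeriv u)) := contDiff_timeDeriv hu (by norm_num)
  have dirichlet_deriv : HasDerivAt (fun s => ∫ z in D, gradSqG γ (u s) z)
      (∫ z in D, 2 * dotG γ (u t) (timeDeriv u t) z) t :=
    hasDerivAt_setIntegral_of_isBounded hD
      (g' := fun t z => 2 * dotG γ (u t) (timeDeriv u t) z)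
      (fun s => continuous_gradSqG hγ (contDiff_slice u_C1 s))
      ((continuous_uncurry_dotG hγ u_C1 ut_C1).const_mul 2) (hasDerivAt_gradSqG γ hu) t
  have potential_deriv : HasDerivAt (fun s => ∫ z in D, (Fprim f (u s z) - θ))
      (∫ z in D, f (u t z) * timeDeriv u t z) t :=
    hasDerivAt_setIntegral_of_isBounded hD (g' := fun t z => f (u t z) * timeDeriv u t z)
      (fun s => ((continuous_Fprim hf).comp (contDiff_slice u_C1 s).continuous).sub
        continuous_const)
      ((hf.comp u_C1.continuous).mul ut_C1.continuous)
      (fun s z => ((hasDerivAt_Fprim hf (u s z)).comp s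
        (hasDerivAt_timeDeriv (hu.differentiable two_ne_zero) s z)).sub_const θ) t
  refine ((dirichlet_deriv.const_mul (-(1 / 2))).add potential_deriv).congr_deriv ?_
  simp only [integral_const_mul, dotG_comm γ (u t), mul_comm (f _)]
  ring

lemma mul_potentialEnergy_le (hDm : MeasurableSet D) (hDb : IsBounded D) {f : ℝ → ℝ}
    (hf : Continuous f) {α β θ lam1 : ℝ} (hα : 2 ≤ α) (hβ : β ≤ lam1 * (α - 2) / 2)
    (hgrowth : ∀ s : ℝ, 0 < s → α * Fprim f s ≤ s * f s + β * s ^ 2 + α * θ)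
    {v : GS m k → ℝ} (hv : ContDiff ℝ 1 v) (hpos : ∀ z ∈ D, 0 < v z)
    (hpoincare : lam1 * ∫ z in D, v z ^ 2 ≤ ∫ z in D, gradSqG γ v z) :
    α * potentialEnergy γ D f θ v ≤ (∫ z in D, v z * f (v z)) - ∫ z in D, gradSqG γ v z := by
  have integrable {g : GS m k → ℝ} (hg : Continuous g) : IntegrableOn g D :=
    integrableOn_of_isBounded_of_continuous hDb hg
  have source_integrable : IntegrableOn (fun z => v z * f (v z)) D :=
    integrable (hv.continuous.mul (hf.comp hv.continuous))
  have sq_integrable : IntegrableOn (fun z => β * v z ^ 2) D :=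
    integrable ((hv.continuous.pow 2).const_mul β)
  have potential_integrable : IntegrableOn (fun z => Fprim f (v z) - θ) D :=
    integrable (((continuous_Fprim hf).comp hv.continuous).sub continuous_const)
  have growth : α * ∫ z in D, (Fprim f (v z) - θ)
      ≤ (∫ z in D, v z * f (v z)) + β * ∫ z in D, v z ^ 2 := by
    rw [← integral_const_mul, ← integral_const_mul, ← integral_add source_integrable sq_integrable]
    refine setIntegral_mono_on (potential_integrable.const_mul α)
      (source_integrable.add sq_integrable) hDm fun z hz => ?_
    linarith [hgrowth _ (hpos z hz)]
  have poincare : β * ∫ z in D, v z ^ 2 ≤ (α - 2) / 2 * ∫ z in D, gradSqG γ v z :=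
    calc β * ∫ z in D, v z ^ 2
        ≤ lam1 * (α - 2) / 2 * ∫ z in D, v z ^ 2 :=
          mul_le_mul_of_nonneg_right hβ (integral_nonneg fun z => sq_nonneg _)
      _ = (α - 2) / 2 * (lam1 * ∫ z in D, v z ^ 2) := by ring
      _ ≤ _ := mul_le_mul_of_nonneg_left hpoincare (by linarith)
  unfold potentialEnergy
  linarith

end Energies

section Solution

lemma mem_of_isClosed_of_forall_pos {T : ℝ≥0∞} {s : Set ℝ} (hs : IsClosed s)
    (h : ∀ t : ℝ, 0 < t → ENNReal.ofReal t < T → t ∈ s) {t : ℝ} (ht : 0 ≤ t)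
    (htT : ENNReal.ofReal t < T) : t ∈ s := by
  have before_T_open : IsOpen {t : ℝ | ENNReal.ofReal t < T} :=
    isOpen_lt ENNReal.continuous_ofReal continuous_const
  have t_mem_closure : t ∈ closure ({t : ℝ | ENNReal.ofReal t < T} ∩ Ioi 0) :=
    before_T_open.inter_closure ⟨htT, closure_Ioi (0 : ℝ) ▸ ht⟩
  exact closure_minimal (fun t ht => h t ht.2 ht.1) hs t_mem_closure

namespace IsPosSolution

variable {m k : ℕ} {γ : ℝ} {D : Set (GS m k)} {f : ℝ → ℝ} {u₀ : GS m k → ℝ} {T : ℝ≥0∞}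
  {u : ℝ → GS m k → ℝ}

lemma contDiff_uncurry (hu : IsPosSolution γ D f u₀ T u) : ContDiff ℝ ∞ (uncurry u) :=
  hu.smooth

lemma contDiff_two (hu : IsPosSolution γ D f u₀ T u) : ContDiff ℝ 2 (uncurry u) :=
  mod_cast contDiff_infty.1 hu.contDiff_uncurry 2

lemma contDiff_uncurry_timeDeriv (hu : IsPosSolution γ D f u₀ T u) :
    ContDiff ℝ ∞ (uncurry (timeDeriv u)) :=
  contDiff_timeDeriv hu.contDiff_uncurry (by simp)

lemma timeDeriv_eq_zero_of_mem_frontier (hu : IsPosSolution γ D f u₀ T u) {t : ℝ} (ht : 0 < t)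
    (htT : ENNReal.ofReal t < T) {z : GS m k} (hz : z ∈ frontier D) : timeDeriv u t z = 0 := by
  have boundary_zero : (fun s => u s z) =ᶠ[nhds t] fun _ => 0 := by
    filter_upwards [lt_mem_nhds ht,
      (isOpen_lt ENNReal.continuous_ofReal continuous_const).mem_nhds htT] with s hs hsT
    exact hu.bdry s hs hsT z hz
  rw [timeDeriv, boundary_zero.deriv_eq, deriv_const]

lemma h1Inner_timeDeriv_add_integral_dotG (hu : IsPosSolution γ D f u₀ T u) (hγ : 0 ≤ γ)
    (hDm : MeasurableSet D) (hDb : IsBounded D) (hDiv : SupportsDivFormula γ D) {t : ℝ}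
    (ht : 0 < t) (htT : ENNReal.ofReal t < T) {v : GS m k → ℝ} (hv : ContDiff ℝ ∞ v)
    (hv₀ : ∀ z ∈ frontier D, v z = 0) :
    h1Inner γ D v (timeDeriv u t) + ∫ z in D, dotG γ v (u t) z = ∫ z in D, v z * f (u t z) := by
  have u_smooth : ContDiff ℝ ∞ (u t) := contDiff_slice hu.contDiff_uncurry t
  have ut_smooth : ContDiff ℝ ∞ (timeDeriv u t) := contDiff_slice hu.contDiff_uncurry_timeDeriv t
  have integrable_mul {w : GS m k → ℝ} (hw : Continuous w) :
      IntegrableOn (fun z => v z * w z) D :=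
    integrableOn_of_isBounded_of_continuous hDb (hv.continuous.mul hw)
  have integrable_mul_lapG {w : GS m k → ℝ} (hw : ContDiff ℝ ∞ w) :
      IntegrableOn (fun z => v z * lapG γ w z) D :=
    integrable_mul (continuous_lapG hγ (mod_cast contDiff_infty.1 hw 2))
  rw [h1Inner_eq_add hγ hDb (hv.of_le (by simp)) (ut_smooth.of_le (by simp))]
  symm
  calc ∫ z in D, v z * f (u t z)
      = ∫ z in D, (v z * timeDeriv u t z - v z * lapG γ (timeDeriv u t) z
          - v z * lapG γ (u t) z) := by
        refine setIntegral_congr_fun hDm fun z hz => ?_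
        simp only [← hu.eqn t ht htT z hz, mul_sub]
        rfl
    _ = (∫ z in D, v z * timeDeriv u t z) - (∫ z in D, v z * lapG γ (timeDeriv u t) z)
          - ∫ z in D, v z * lapG γ (u t) z := by
        rw [integral_sub ((integrable_mul ut_smooth.continuous).fun_sub
          (integrable_mul_lapG ut_smooth)) (integrable_mul_lapG u_smooth),
          integral_sub (integrable_mul ut_smooth.continuous) (integrable_mul_lapG ut_smooth)]
    _ = _ := by
        rw [hDiv v _ hv ut_smooth hv₀, hDiv v _ hv u_smooth hv₀]
        ring

lemma potentialEnergy_eq_add_integral (hu : IsPosSolution γ D f u₀ T u) (hγ : 0 ≤ γ)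
    (hDo : IsOpen D) (hDb : IsBounded D) (hDiv : SupportsDivFormula γ D) (hf : Continuous f)
    (θ : ℝ) {t : ℝ} (ht : 0 ≤ t) (htT : ENNReal.ofReal t < T) :
    potentialEnergy γ D f θ (u t)
      = potentialEnergy γ D f θ u₀ + ∫ s in (0 : ℝ)..t, h1Energy γ D (timeDeriv u s) := by
  have ut_C1 : ContDiff ℝ 1 (uncurry (timeDeriv u)) :=
    hu.contDiff_uncurry_timeDeriv.of_le (by simp)
  have potential_deriv (s : ℝ) := hasDerivAt_potentialEnergy hγ hDb hf θ hu.contDiff_two s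
  have energy_continuous := continuous_h1Energy hγ hDb ut_C1
  have potential_continuous : Continuous fun s => potentialEnergy γ D f θ (u s) :=
    continuous_iff_continuousAt.2 fun s => (potential_deriv s).continuousAt
  have deriv_eq_energy (s : ℝ) (hs : s ∈ Ioo 0 t) :
      HasDerivAt (fun s => potentialEnergy γ D f θ (u s)) (h1Energy γ D (timeDeriv u s)) s := by
    have hsT : ENNReal.ofReal s < T := (ENNReal.ofReal_le_ofReal hs.2.le).trans_lt htT
    have tested_with_ut := hu.h1Inner_timeDeriv_add_integral_dotG hγ hDo.measurableSet hDb hDiv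
      hs.1 hsT (contDiff_slice hu.contDiff_uncurry_timeDeriv s)
      fun z hz => hu.timeDeriv_eq_zero_of_mem_frontier hs.1 hsT hz
    rw [← h1Inner_self, eq_sub_of_add_eq tested_with_ut]
    exact potential_deriv s
  rw [intervalIntegral.integral_eq_sub_of_hasDerivAt_of_le ht potential_continuous.continuousOn
    deriv_eq_energy (energy_continuous.intervalIntegrable 0 t),
    potentialEnergy_congr hDo fun z hz => hu.init z (subset_closure hz), add_sub_cancel]

lemma mul_potentialEnergy_le_h1Inner (hu : IsPosSolution γ D f u₀ T u) (hγ : 0 ≤ γ)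
    (hDm : MeasurableSet D) (hDb : IsBounded D) (hDiv : SupportsDivFormula γ D)
    (hf : Continuous f) {α β θ lam1 : ℝ} (hα : 2 ≤ α) (hβ : β ≤ lam1 * (α - 2) / 2)
    (hPoincare : ∀ v : GS m k → ℝ, ContDiff ℝ 1 v → (∀ z ∈ frontier D, v z = 0) →
      lam1 * ∫ z in D, (v z) ^ 2 ≤ ∫ z in D, gradSqG γ v z)
    (hgrowth : ∀ s : ℝ, 0 < s → α * Fprim f s ≤ s * f s + β * s ^ 2 + α * θ)
    {t : ℝ} (ht : 0 ≤ t) (htT : ENNReal.ofReal t < T) :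
    α * potentialEnergy γ D f θ (u t) ≤ h1Inner γ D (u t) (timeDeriv u t) := by
  have potential_continuous : Continuous fun s => potentialEnergy γ D f θ (u s) :=
    continuous_iff_continuousAt.2 fun s =>
      (hasDerivAt_potentialEnergy hγ hDb hf θ hu.contDiff_two s).continuousAt
  have inner_continuous : Continuous fun s => h1Inner γ D (u s) (timeDeriv u s) :=
    continuous_h1Inner hγ hDb (hu.contDiff_uncurry.of_le (by simp))
      (hu.contDiff_uncurry_timeDeriv.of_le (by simp))
  refine mem_of_isClosed_of_forall_pos
    (isClosed_le (potential_continuous.const_mul α) inner_continuous) (fun s hs hsT => ?_) ht htT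
  have us_smooth : ContDiff ℝ ∞ (u s) := contDiff_slice hu.contDiff_uncurry s
  have us_C1 : ContDiff ℝ 1 (u s) := us_smooth.of_le (by simp)
  have tested_with_u := hu.h1Inner_timeDeriv_add_integral_dotG hγ hDm hDb hDiv hs hsT us_smooth
    (hu.bdry s hs hsT)
  simp only [← gradSqG_eq_dotG_self] at tested_with_u
  rw [mem_ofPred_eq, eq_sub_of_add_eq tested_with_u]
  exact mul_potentialEnergy_le hDm hDb hf hα hβ hgrowth us_C1 (hu.pos s hs hsT)
    (hPoincare (u s) us_C1 (hu.bdry s hs hsT))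

end IsPosSolution

end Solution

theorem grushin_concavity_estimate_general {m k : ℕ} {γ : ℝ} (hγ : 0 ≤ γ) {D : Set (GS m k)}
    (hDo : IsOpen D) (hDb : IsBounded D) (hDiv : SupportsDivFormula γ D) {f : ℝ → ℝ}
    (hf : Continuous f) {α β θ lam1 : ℝ} (hα : 2 < α) (hβ : β ≤ lam1 * (α - 2) / 2)
    (hPoincare : ∀ v : GS m k → ℝ, ContDiff ℝ 1 v → (∀ z ∈ frontier D, v z = 0) →
      lam1 * ∫ z in D, (v z) ^ 2 ≤ ∫ z in D, gradSqG γ v z)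
    (hgrowth : ∀ s : ℝ, 0 < s → α * Fprim f s ≤ s * f s + β * s ^ 2 + α * θ)
    {u₀ : GS m k → ℝ} {F₀ : ℝ} (hF₀ : F₀ = potentialEnergy γ D f θ u₀) (hF₀pos : 0 < F₀)
    {σ M : ℝ} (hσ : σ = √(α / 2) - 1)
    (hM : M = (1 + σ) * (1 + 1 / σ) * h1Energy γ D u₀ ^ 2 / (2 * α * F₀))
    {T : ℝ≥0∞} {u : ℝ → GS m k → ℝ} (hu : IsPosSolution γ D f u₀ T u) (t : ℝ) (ht : 0 ≤ t)
    (htT : ENNReal.ofReal t < T) :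
    ∃ d : ℝ,
      HasDerivAt (fun s => (∫ τ in (0 : ℝ)..s, h1Energy γ D (u τ)) + M) (h1Energy γ D (u t)) t ∧
      HasDerivAt (fun s => h1Energy γ D (u s)) d t ∧
      0 ≤ d * ((∫ τ in (0 : ℝ)..t, h1Energy γ D (u τ)) + M)
          - (1 + σ) * h1Energy γ D (u t) ^ 2 := by
  have u_C1 : ContDiff ℝ 1 (uncurry u) := hu.contDiff_uncurry.of_le (by simp)
  have ut_C1 : ContDiff ℝ 1 (uncurry (timeDeriv u)) :=
    hu.contDiff_uncurry_timeDeriv.of_le (by simp)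
  have energy_deriv := hasDerivAt_h1Energy hγ hDb hu.contDiff_two
  have cauchy_schwarz := sq_sub_le_of_quadratic_nonneg ht energy_deriv
    ((continuous_h1Inner hγ hDb u_C1 ut_C1).const_mul 2) (continuous_h1Energy hγ hDb ut_C1)
    fun s => h1Energy_quadratic_nonneg hγ hDb (contDiff_slice u_C1 s) (contDiff_slice ut_C1 s)
  have second_deriv_lower_bound : 2 * α * (F₀ + ∫ s in (0 : ℝ)..t, h1Energy γ D (timeDeriv u s))
      ≤ 2 * h1Inner γ D (u t) (timeDeriv u t) := by
    rw [hF₀, ← hu.potentialEnergy_eq_add_integral hγ hDo hDb hDiv hf θ ht htT, mul_assoc]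
    gcongr
    exact hu.mul_potentialEnergy_le_h1Inner hγ hDo.measurableSet hDb hDiv hf hα.le hβ hPoincare
      hgrowth ht htT
  have energy_init : h1Energy γ D (u 0) = h1Energy γ D u₀ :=
    h1Energy_congr hDo fun z hz => hu.init z (subset_closure hz)
  refine ⟨_, ?_, energy_deriv t, concavity_of_sq_sub_le hα hσ hF₀pos (energy_init ▸ hM)
    (intervalIntegral.integral_nonneg ht fun s _ => h1Energy_nonneg γ D (u s))
    (intervalIntegral.integral_nonneg ht fun s _ => h1Energy_nonneg γ D (timeDeriv u s))
    cauchy_schwarz second_deriv_lower_bound⟩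
  exact ((continuous_h1Energy hγ hDb u_C1).integral_hasStrictDerivAt 0 t).hasDerivAt.add_const M

/-- **Concavity estimate.** Under the growth condition `α F(u) ≤ u f(u) + β u² + α θ`
with `α > 2`, `0 < β ≤ λ₁(α−2)/2`, `θ > 0` and `𝓕₀ > 0`, let `u` be a positive classical
solution, `σ := √(α/2) − 1`, `M := (1+σ)(1+1/σ)(∫_D (u₀² + |∇_γ u₀|²))²/(2α𝓕₀)`, and
`E(t) := ∫₀ᵗ ∫_D (u² + |∇_γ u|²) + M`. Then `E''(t)E(t) − (1+σ)(E'(t))² ≥ 0` for all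
`t ≥ 0` in the interval of existence. -/
theorem grushin_concavity_estimate
    (m k : ℕ) (hm : 1 ≤ m) (hk : 1 ≤ k) (γ : ℝ) (hγ : 0 ≤ γ)
    (D : Set (GS m k)) (hD : GoodDomain m k D) (hDiv : SupportsDivFormula γ D)
    (f : ℝ → ℝ) (hf : GoodNonlinearity f)
    (α β θ lam1 : ℝ) (hα : 2 < α) (hβpos : 0 < β) (hβ : β ≤ lam1 * (α - 2) / 2)
    (hθ : 0 < θ) (hlam1 : 0 < lam1)
    (hPoincare : ∀ v : GS m k → ℝ, ContDiff ℝ 1 v → (∀ z ∈ frontier D, v z = 0) →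
      lam1 * ∫ z in D, (v z) ^ 2 ≤ ∫ z in D, gradSqG γ v z)
    (hgrowth : ∀ s : ℝ, 0 < s → α * Fprim f s ≤ s * f s + β * s ^ 2 + α * θ)
    (u₀ : GS m k → ℝ) (hu₀ : GoodInitialData D u₀)
    (hu₀int : IntegrableOn (fun z => (u₀ z) ^ 2 + gradSqG γ u₀ z) D volume)
    (F₀ : ℝ)
    (hF₀ : F₀ = -(1 / 2) * (∫ z in D, gradSqG γ u₀ z) + ∫ z in D, (Fprim f (u₀ z) - θ))
    (hF₀pos : 0 < F₀)
    (σ M : ℝ) (hσ : σ = Real.sqrt (α / 2) - 1)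
    (hM : M = (1 + σ) * (1 + 1 / σ) *
      (∫ z in D, ((u₀ z) ^ 2 + gradSqG γ u₀ z)) ^ 2 / (2 * α * F₀))
    (T : ℝ≥0∞) (hT : 0 < T) (u : ℝ → GS m k → ℝ)
    (hu : IsPosSolution γ D f u₀ T u) :
    ∀ t : ℝ, 0 ≤ t → ENNReal.ofReal t < T →
      ∃ d : ℝ,
        HasDerivAt (fun s => (∫ τ in (0 : ℝ)..s, ∫ z in D, ((u τ z) ^ 2 + gradSqG γ (u τ) z)) + M)
          (∫ z in D, ((u t z) ^ 2 + gradSqG γ (u t) z)) t ∧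
        HasDerivAt (fun s => ∫ z in D, ((u s z) ^ 2 + gradSqG γ (u s) z)) d t ∧
        0 ≤ d * ((∫ τ in (0 : ℝ)..t, ∫ z in D, ((u τ z) ^ 2 + gradSqG γ (u τ) z)) + M)
            - (1 + σ) * (∫ z in D, ((u t z) ^ 2 + gradSqG γ (u t) z)) ^ 2 := by
  exact grushin_concavity_estimate_general hγ hD.isOpen hD.isBounded hDiv
    hf.locallyLipschitz.continuous hα hβ hPoincare hgrowth hF₀ hF₀pos hσ hM hu
end
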